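/- Let α ∈ (0,1) be irrational, let X be a complex Banach space, let (λₙ)_{n≥1} be a strictly increasing sequence of positive real numbers with λₙ → +∞, and let (cₙ¹)_{n≥1} and (cₙ²)_{n≥1} be sequences in X with ∑ₙ (‖cₙ¹‖ + ‖cₙ²‖)/λₙ < ∞. Let S₁, S₂ : ℂ → ℂ be entire and let G : ℂ → X be entire, such that G(p) = S₁(p)·∑ₙ cₙ¹/(λₙ + p^α) − S₂(p)·∑ₙ cₙ²/(λₙ + p^α) for every p ∈ ℂ∖(−∞,0]. Then S₁(p)·cₙ¹ = S₂(p)·cₙ² for every p ∈ ℂ and every n ≥ 1. -/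

import Mathlib

open Complex Set Filter Topology

lemma aux_bound (l : ℕ → ℝ) (hlpos : ∀ n, 0 < l n) (hltop : Tendsto l atTop atTop) (z₀ : ℂ) :
    ∃ C : ℝ, 0 < C ∧ ∀ᶠ z in 𝓝 z₀, ∀ m, (l m : ℂ) + z₀ ≠ 0 → l m ≤ C * ‖(l m : ℂ) + z‖ := by
  obtain ⟨N, hN⟩ := eventually_atTop.1 (hltop.eventually_ge_atTop (2 * (‖z₀‖ + 1)))
  have hnn : ∀ m, 0 ≤ l m * 2 / ‖(l m : ℂ) + z₀‖ := fun m => by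
    have := hlpos m
    positivity
  have hs : 0 ≤ ∑ m ∈ Finset.range N, l m * 2 / ‖(l m : ℂ) + z₀‖ :=
    Finset.sum_nonneg fun m _ => hnn m
  refine ⟨2 + ∑ m ∈ Finset.range N, l m * 2 / ‖(l m : ℂ) + z₀‖, by positivity, ?_⟩
  have h1 : ∀ᶠ z in 𝓝 z₀, ∀ m ∈ Finset.range N, (l m : ℂ) + z₀ ≠ 0 →
      ‖(l m : ℂ) + z₀‖ / 2 < ‖(l m : ℂ) + z‖ := by
    rw [Filter.eventually_all_finset]
    intro m _
    by_cases h : (l m : ℂ) + z₀ = 0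
    · simp [h]
    · have hc : Tendsto (fun z : ℂ => ‖(l m : ℂ) + z‖) (𝓝 z₀) (𝓝 ‖(l m : ℂ) + z₀‖) :=
        Continuous.tendsto (by fun_prop) z₀
      have := hc.eventually_const_lt (half_lt_self (norm_pos_iff.2 h))
      filter_upwards [this] with z hz _ using hz
  filter_upwards [h1, Metric.ball_mem_nhds z₀ one_pos] with z hz hb m hm
  by_cases hmN : m < N
  · have h2 := hz m (Finset.mem_range.2 hmN) hm
    have h3 := Finset.single_le_sum (fun i _ => hnn i) (Finset.mem_range.2 hmN)
    have h4 := norm_pos_iff.2 hm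
    calc l m = l m * 2 / ‖(l m : ℂ) + z₀‖ * (‖(l m : ℂ) + z₀‖ / 2) := by field_simp
      _ ≤ _ := by
        apply mul_le_mul _ h2.le (by positivity) (by positivity)
        linarith
  · have h2 := hN m (not_lt.1 hmN)
    have h3 : ‖z‖ ≤ ‖z₀‖ + 1 := by
      have : ‖z - z₀‖ < 1 := by simpa [dist_eq_norm] using hb
      have := norm_sub_norm_le z z₀
      linarith
    have h4 : l m - ‖z‖ ≤ ‖(l m : ℂ) + z‖ := by
      have := norm_sub_le_norm_add (l m : ℂ) z
      rwa [Complex.norm_of_nonneg (hlpos m).le] at this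
    have h5 := mul_nonneg hs (norm_nonneg ((l m : ℂ) + z))
    linarith

lemma aux_term {X : Type*} [NormedAddCommGroup X] [NormedSpace ℂ X]
    (a C : ℝ) (ha : 0 < a) (hC : 0 < C) (z : ℂ) (x : X) (h : a ≤ C * ‖(a : ℂ) + z‖) :
    ‖((a : ℂ) + z)⁻¹ • x‖ ≤ C * (‖x‖ / a) := by
  have h1 : 0 < ‖(a : ℂ) + z‖ := by
    by_contra h0
    have : ‖(a : ℂ) + z‖ = 0 := le_antisymm (not_lt.1 h0) (norm_nonneg _)
    rw [this] at h
    linarith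
  rw [norm_smul, norm_inv]
  have : ‖(a : ℂ) + z‖⁻¹ ≤ C / a := by
    rw [inv_eq_one_div, div_le_div_iff₀ h1 ha]
    linarith
  calc _ ≤ C / a * ‖x‖ := by gcongr
    _ = _ := by ring

lemma aux_diff {X : Type*} [NormedAddCommGroup X] [NormedSpace ℂ X] [CompleteSpace X]
    (l : ℕ → ℝ) (hlpos : ∀ n, 0 < l n) (hltop : Tendsto l atTop atTop)
    (c : ℕ → X) (hc : Summable (fun n => ‖c n‖ / l n)) (z₀ : ℂ)
    (hz : ∀ n, (l n : ℂ) + z₀ ≠ 0) :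
    DifferentiableAt ℂ (fun z => ∑' n, ((l n : ℂ) + z)⁻¹ • c n) z₀ := by
  obtain ⟨C, hC, h⟩ := aux_bound l hlpos hltop z₀
  obtain ⟨U, hU, hUo, hzU⟩ := eventually_nhds_iff.1 h
  refine (differentiableOn_tsum_of_summable_norm (U := U) (hc.mul_left C) ?_ hUo ?_).differentiableAt
    (hUo.mem_nhds hzU)
  · intro n z hzz
    have h1 : (l n : ℂ) + z ≠ 0 := by
      intro h0
      have h2 := hU z hzz n (hz n)
      have h3 := hlpos n
      rw [h0, norm_zero, mul_zero] at h2
      linarith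
    exact (((differentiableAt_id.const_add _).inv h1).smul_const _).differentiableWithinAt
  · intro n z hzz
    exact aux_term _ _ (hlpos n) hC _ _ (hU z hzz n (hz n))

lemma aux_res {X : Type*} [NormedAddCommGroup X] [NormedSpace ℂ X] [CompleteSpace X]
    (l : ℕ → ℝ) (hl : StrictMono l) (hlpos : ∀ n, 0 < l n) (hltop : Tendsto l atTop atTop)
    (c : ℕ → X) (hc : Summable (fun n => ‖c n‖ / l n)) (n : ℕ) :
    Tendsto (fun z => ((l n : ℂ) + z) • ∑' m, ((l m : ℂ) + z)⁻¹ • c m)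
      (𝓝[≠] (-(l n : ℂ))) (𝓝 (c n)) := by
  obtain ⟨C, hC, h⟩ := aux_bound l hlpos hltop (-(l n : ℂ))
  have hne : ∀ m, m ≠ n → (l m : ℂ) + -(l n : ℂ) ≠ 0 := by
    intro m hm h0
    apply hm
    apply hl.injective
    have : (l m : ℂ) = l n := by linear_combination h0
    exact_mod_cast this
  have key : Tendsto (fun z => ∑' m, ((l n : ℂ) + z) • ((l m : ℂ) + z)⁻¹ • c m)
      (𝓝[≠] (-(l n : ℂ))) (𝓝 (∑' m, if m = n then c n else 0)) := by
    have hsmall : Tendsto (fun z : ℂ => (l n : ℂ) + z) (𝓝 (-(l n : ℂ))) (𝓝 0) := by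
      have : Continuous (fun z : ℂ => (l n : ℂ) + z) := by fun_prop
      simpa using this.tendsto (-(l n : ℂ))
    have hself : ∀ z : ℂ, z ≠ -(l n : ℂ) →
        ((l n : ℂ) + z) • ((l n : ℂ) + z)⁻¹ • c n = c n := by
      intro z hz
      rw [smul_inv_smul₀]
      intro h0
      exact hz (by linear_combination h0)
    refine tendsto_tsum_of_dominated_convergence
      (bound := fun m => (C + l n) * (‖c m‖ / l m) + if m = n then ‖c n‖ else 0) ?_ ?_ ?_
    · exact (hc.mul_left _).add (summable_of_ne_finset_zero (s := {n}) (by simp_all))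
    · intro m
      by_cases hm : m = n
      · subst hm
        simp only [if_true]
        refine tendsto_const_nhds.congr' ?_
        filter_upwards [self_mem_nhdsWithin] with z hz
        exact (hself z hz).symm
      · simp only [hm, if_false]
        have h1 : Tendsto (fun z : ℂ => ((l m : ℂ) + z)⁻¹ • c m) (𝓝 (-(l n : ℂ)))
            (𝓝 (((l m : ℂ) + -(l n : ℂ))⁻¹ • c m)) := by
          refine Tendsto.smul_const (Tendsto.inv₀ ?_ (hne m hm)) _
          exact tendsto_id.const_add _
        have := hsmall.smul h1
        rw [zero_smul] at this
        exact this.mono_left nhdsWithin_le_nhds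
    · have h2 : ∀ᶠ z in 𝓝 (-(l n : ℂ)), ‖(l n : ℂ) + z‖ < 1 := by
        have := hsmall.norm
        rw [norm_zero] at this
        exact this.eventually_lt_const one_pos
      filter_upwards [self_mem_nhdsWithin, nhdsWithin_le_nhds h, nhdsWithin_le_nhds h2]
        with z hz hb hs m
      have hp := hlpos m
      have hp' := hlpos n
      by_cases hm : m = n
      · subst hm
        rw [hself z hz]
        simp only [if_true]
        have : 0 ≤ (C + l m) * (‖c m‖ / l m) := by positivity
        linarith
      · have h3 := aux_term _ _ hp hC z (c m) (hb m (hne m hm))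
        rw [norm_smul]
        simp only [hm, if_false]
        have h4 : 0 ≤ l n * (‖c m‖ / l m) := by positivity
        have h5 := mul_le_mul hs.le h3 (norm_nonneg _) zero_le_one
        linarith
  rw [tsum_ite_eq] at key
  refine key.congr' ?_
  filter_upwards [self_mem_nhdsWithin] with z hz
  rw [tsum_const_smul'']

/-- Abstract analytic core of Theorem 1.2: for irrational `α ∈ (0,1)`, if
`G(p) = S₁(p) ∑ₙ cₙ¹/(λₙ + p^α) − S₂(p) ∑ₙ cₙ²/(λₙ + p^α)` on the cut plane
with `G`, `S₁`, `S₂` entire, then `S₁(p)·cₙ¹ = S₂(p)·cₙ²` everywhere. -/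
theorem source_terms_coincide
    {X : Type*} [NormedAddCommGroup X] [NormedSpace ℂ X] [CompleteSpace X]
    (α : ℝ) (hα : α ∈ Ioo (0:ℝ) 1) (hirr : Irrational α)
    (l : ℕ → ℝ) (hl : StrictMono l) (hlpos : ∀ n, 0 < l n)
    (hltop : Tendsto l atTop atTop)
    (c₁ c₂ : ℕ → X)
    (hc : Summable (fun n => (‖c₁ n‖ + ‖c₂ n‖) / l n))
    (S₁ S₂ : ℂ → ℂ) (hS₁ : Differentiable ℂ S₁) (hS₂ : Differentiable ℂ S₂)
    (G : ℂ → X) (hG : Differentiable ℂ G)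
    (hGS : ∀ p ∈ Complex.slitPlane,
      G p = S₁ p • (∑' n, ((l n : ℂ) + p ^ (α : ℂ))⁻¹ • c₁ n)
        - S₂ p • (∑' n, ((l n : ℂ) + p ^ (α : ℂ))⁻¹ • c₂ n)) :
    ∀ p : ℂ, ∀ n : ℕ, S₁ p • c₁ n = S₂ p • c₂ n := by

  classical
  intro p n
  have hα0 : α ≠ 0 := hα.1.ne'
  have hαC : (α : ℂ) ≠ 0 := by exact_mod_cast hα0
  have hc1 : Summable (fun n => ‖c₁ n‖ / l n) := by
    refine Summable.of_nonneg_of_le (fun m => ?_) (fun m => ?_) hc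
    · have := hlpos m
      positivity
    · have := hlpos m
      gcongr
      linarith [norm_nonneg (c₂ m)]
  have hc2 : Summable (fun n => ‖c₂ n‖ / l n) := by
    refine Summable.of_nonneg_of_le (fun m => ?_) (fun m => ?_) hc
    · have := hlpos m
      positivity
    · have := hlpos m
      gcongr
      linarith [norm_nonneg (c₁ m)]
  set F₁ : ℂ → X := fun z => ∑' n, ((l n : ℂ) + z)⁻¹ • c₁ n with hF₁
  set F₂ : ℂ → X := fun z => ∑' n, ((l n : ℂ) + z)⁻¹ • c₂ n with hF₂
  set P : Set ℂ := {w | ∃ n, (l n : ℂ) + exp (w * α) = 0} with hP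
  have hPc : P.Countable := by
    refine (countable_range (fun q : ℕ × ℤ =>
      (Complex.log (-(l q.1 : ℂ)) + q.2 * (2 * Real.pi * I)) / α)).mono ?_
    rintro w ⟨m, hm⟩
    have hne : -(l m : ℂ) ≠ 0 := by
      have := (hlpos m).ne'
      simpa using this
    have h1 : exp (w * α) = exp (Complex.log (-(l m : ℂ))) := by
      rw [Complex.exp_log hne]
      linear_combination hm
    obtain ⟨k, hk⟩ := Complex.exp_eq_exp_iff_exists_int.1 h1
    refine ⟨(m, k), ?_⟩
    simp only
    rw [← hk]
    field_simp
  have hconn : IsPreconnected Pᶜ :=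
    (hPc.isConnected_compl_of_one_lt_rank (by simp)).isPreconnected
  have hexpc : Continuous (fun w : ℂ => exp (w * α)) := by fun_prop
  have hopen : IsOpen Pᶜ := by
    rw [isOpen_iff_eventually]
    intro w hw
    obtain ⟨C, hC, h⟩ := aux_bound l hlpos hltop (exp (w * α))
    filter_upwards [(hexpc.tendsto w).eventually h] with v hv
    rintro ⟨m, hm⟩
    have h1 := hv m (fun h0 => hw ⟨m, h0⟩)
    rw [hm] at h1
    have := hlpos m
    simp at h1
    linarith
  have hd1 : DifferentiableOn ℂ (fun w => S₁ (exp w) • F₁ (exp (w * α))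
      - S₂ (exp w) • F₂ (exp (w * α))) Pᶜ := by
    intro w hw
    have hw' : ∀ n, (l n : ℂ) + exp (w * α) ≠ 0 := fun m h0 => hw ⟨m, h0⟩
    have e1 : DifferentiableAt ℂ (fun w : ℂ => exp (w * α)) w := by fun_prop
    have e2 : DifferentiableAt ℂ (fun w : ℂ => exp w) w := by fun_prop
    have f1 : DifferentiableAt ℂ (fun w : ℂ => F₁ (exp (w * α))) w :=
      DifferentiableAt.comp (g := F₁) w (aux_diff l hlpos hltop c₁ hc1 _ hw') e1
    have f2 : DifferentiableAt ℂ (fun w : ℂ => F₂ (exp (w * α))) w :=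
      DifferentiableAt.comp (g := F₂) w (aux_diff l hlpos hltop c₂ hc2 _ hw') e1
    have s1 : DifferentiableAt ℂ (fun w : ℂ => S₁ (exp w)) w := (hS₁ _).comp w e2
    have s2 : DifferentiableAt ℂ (fun w : ℂ => S₂ (exp w)) w := (hS₂ _).comp w e2
    exact ((s1.smul f1).sub (s2.smul f2)).differentiableWithinAt
  have hd2 : DifferentiableOn ℂ (fun w => G (exp w)) Pᶜ :=
    (hG.comp Complex.differentiable_exp).differentiableOn
  have h0P : (0 : ℂ) ∈ Pᶜ := by
    rintro ⟨m, hm⟩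
    have := hlpos m
    have h1 : ((l m + 1 : ℝ) : ℂ) = 0 := by
      simpa using hm
    have h2 : l m + 1 = 0 := by exact_mod_cast h1
    linarith
  have heq : EqOn (fun w => G (exp w)) (fun w => S₁ (exp w) • F₁ (exp (w * α))
      - S₂ (exp w) • F₂ (exp (w * α))) Pᶜ := by
    refine (hd2.analyticOnNhd hopen).eqOn_of_preconnected_of_eventuallyEq
      (hd1.analyticOnNhd hopen) hconn h0P ?_
    filter_upwards [Metric.ball_mem_nhds (0 : ℂ) one_pos] with w hw
    have hw1 : |w.im| < 1 := lt_of_le_of_lt (Complex.abs_im_le_norm w) (by simpa using hw)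
    have hpi := Real.pi_gt_three
    obtain ⟨ha, hb⟩ := abs_lt.1 hw1
    have hlog : Complex.log (exp w) = w := Complex.log_exp (by linarith) (by linarith)
    have hslit : exp w ∈ Complex.slitPlane := by
      rw [Complex.mem_slitPlane_iff_arg]
      refine ⟨?_, Complex.exp_ne_zero w⟩
      rw [← Complex.log_im, hlog]
      linarith
    have := hGS _ hslit
    rw [Complex.cpow_def_of_ne_zero (Complex.exp_ne_zero w), hlog] at this
    exact this
  -- vanishing at the points
  have hvan : ∀ w : ℂ, exp (w * α) = -(l n : ℂ) → S₁ (exp w) • c₁ n = S₂ (exp w) • c₂ n := by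
    intro w hw
    have hder : HasDerivAt (fun w : ℂ => exp (w * α)) (exp (w * α) * (1 * α)) w :=
      ((hasDerivAt_id w).mul_const (α : ℂ)).cexp
    have hne := hder.tendsto_nhdsNE (mul_ne_zero (Complex.exp_ne_zero _) (by simpa using hαC))
    rw [hw] at hne
    have r1 := (aux_res l hl hlpos hltop c₁ hc1 n).comp hne
    have r2 := (aux_res l hl hlpos hltop c₂ hc2 n).comp hne
    have t1 : Tendsto (fun w => S₁ (exp w)) (𝓝[≠] w) (𝓝 (S₁ (exp w))) :=
      ((hS₁.continuous.comp Complex.continuous_exp).tendsto w).mono_left nhdsWithin_le_nhds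
    have t2 : Tendsto (fun w => S₂ (exp w)) (𝓝[≠] w) (𝓝 (S₂ (exp w))) :=
      ((hS₂.continuous.comp Complex.continuous_exp).tendsto w).mono_left nhdsWithin_le_nhds
    have t3 : Tendsto (fun w => ((l n : ℂ) + exp (w * α)) • G (exp w)) (𝓝[≠] w) (𝓝 0) := by
      have hcont : Continuous (fun w => ((l n : ℂ) + exp (w * α)) • G (exp w)) :=
        (continuous_const.add hexpc).smul (hG.continuous.comp Complex.continuous_exp)
      have := hcont.tendsto w
      simp only [hw, add_neg_cancel, zero_smul] at this
      exact this.mono_left nhdsWithin_le_nhds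
    have t4 := (t1.smul r1).sub (t2.smul r2)
    have hev : ∀ᶠ v in 𝓝[≠] w, v ∈ Pᶜ := by
      obtain ⟨C, hC, h⟩ := aux_bound l hlpos hltop (-(l n : ℂ))
      have hh := hexpc.tendsto w
      rw [hw] at hh
      filter_upwards [nhdsWithin_le_nhds (hh.eventually h), hne self_mem_nhdsWithin] with v hv hv2
      rintro ⟨m, hm⟩
      by_cases hmn : (l m : ℂ) + -(l n : ℂ) = 0
      · exact hv2 (show exp (v * α) = -(l n : ℂ) by linear_combination hm - hmn)
      · have h1 := hv m hmn
        rw [hm] at h1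
        have := hlpos m
        simp at h1
        linarith
    have t5 := t3.congr' (f₂ := fun v => S₁ (exp v) • (((l n : ℂ) + exp (v * α)) • F₁ (exp (v * α)))
        - S₂ (exp v) • (((l n : ℂ) + exp (v * α)) • F₂ (exp (v * α)))) (by
      filter_upwards [hev] with v hv
      have := heq hv
      simp only at this
      rw [this, smul_sub, smul_comm _ (S₁ _), smul_comm _ (S₂ _)])
    exact sub_eq_zero.1 (tendsto_nhds_unique t4 t5)
  -- infinitely many points
  let wk : ℤ → ℂ := fun k => (((Real.log (l n) : ℝ) : ℂ) + (2 * k + 1) * (Real.pi * I)) / α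
  have hwk : ∀ k, exp (wk k * α) = -(l n : ℂ) := by
    intro k
    have : wk k * α = ((Real.log (l n) : ℝ) : ℂ) + Real.pi * I + k * (2 * Real.pi * I) := by
      simp only [wk]
      field_simp
      ring
    rw [this, Complex.exp_add, Complex.exp_int_mul_two_pi_mul_I, Complex.exp_add,
      Complex.exp_pi_mul_I, ← Complex.ofReal_exp, Real.exp_log (hlpos n)]
    ring
  have hinj : Function.Injective (fun k => exp (wk k)) := by
    intro k j hkj
    obtain ⟨m, hm⟩ := Complex.exp_eq_exp_iff_exists_int.1 hkj
    have hpiC : (Real.pi : ℂ) ≠ 0 := by exact_mod_cast Real.pi_ne_zero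
    have h1 : (k : ℂ) - j = m * α := by
      simp only [wk] at hm
      field_simp at hm
      have h2 : (2 * Real.pi * I : ℂ) * ((k : ℂ) - j - m * α) = 0 := by
        linear_combination hm
      have h3 : (2 * Real.pi * I : ℂ) ≠ 0 := by simp [hpiC]
      have := (mul_eq_zero.1 h2).resolve_left h3
      linear_combination this
    have h2 : (k : ℝ) - j = m * α := by exact_mod_cast h1
    by_cases hm0 : m = 0
    · subst hm0
      have : (k : ℝ) = j := by
        simp at h2
        linarith
      exact_mod_cast this
    · exfalso
      have hmR : (m : ℝ) ≠ 0 := by exact_mod_cast hm0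
      apply hirr
      refine ⟨((k - j : ℤ) : ℚ) / m, ?_⟩
      push_cast
      rw [h2]
      field_simp
  have hnorm : range (fun k => exp (wk k)) ⊆
      Metric.closedBall 0 (Real.exp (Real.log (l n) / α)) := by
    rintro _ ⟨k, rfl⟩
    have : (wk k).re = Real.log (l n) / α := by
      simp [wk, Complex.div_ofReal_re]
    simp [Complex.norm_exp, this]
  obtain ⟨x, -, hx⟩ := (infinite_range_of_injective hinj).exists_accPt_of_subset_isCompact
    (isCompact_closedBall _ _) hnorm
  have hfin : (fun p => S₁ p • c₁ n) = (fun p => S₂ p • c₂ n) := by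
    refine AnalyticOnNhd.eq_of_frequently_eq (𝕜 := ℂ) (z₀ := x)
      ((hS₁.smul_const (c₁ n)).differentiableOn.analyticOnNhd isOpen_univ)
      ((hS₂.smul_const (c₂ n)).differentiableOn.analyticOnNhd isOpen_univ) ?_
    refine (accPt_iff_frequently_nhdsNE.1 hx).mono ?_
    rintro _ ⟨k, rfl⟩
    exact hvan _ (hwk k)
  exact congrFun hfin p
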